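/- arXiv:1807.04394 — 12 statements merged into one kernel-verified Lean document; each statement's English description precedes it below -/
import Mathlib

section
/- Let p > 5 be a prime, K a field of characteristic p, and s, t nonzero elements of K. Then the polynomials x and y both belong to the radical of the ideal of K[x,y,z] generated by F = x*y*z^3 + s*x^5 + t*y^5 together with its three partial derivatives ∂F/∂x = y*z^3 + 5*s*x^4, ∂F/∂y = x*z^3 + 5*t*y^4, ∂F/∂z = 3*x*y*z^2. (Consequently the only singular point of the projective plane curve F = 0 is [0:0:1].) -/
open MvPolynomial

/-- For a prime `p > 5`, a field `K` of characteristic `p` and nonzero `s, t : K`,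
the variables `x` and `y` belong to the radical of the ideal generated by
`F = x*y*z^3 + s*x^5 + t*y^5` together with its three formal partial derivatives. -/
theorem stmt_0 (p : ℕ) (hp : p.Prime) (hp5 : 5 < p)
    (K : Type*) [Field K] [CharP K p] (s t : K) (hs : s ≠ 0) (ht : t ≠ 0)
    (F : MvPolynomial (Fin 3) K)
    (hF : F = X 0 * X 1 * X 2 ^ 3 + C s * X 0 ^ 5 + C t * X 1 ^ 5) :
    X 0 ∈ (Ideal.span {F, pderiv 0 F, pderiv 1 F, pderiv 2 F} : Ideal (MvPolynomial (Fin 3) K)).radical ∧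
    X 1 ∈ (Ideal.span {F, pderiv 0 F, pderiv 1 F, pderiv 2 F} : Ideal (MvPolynomial (Fin 3) K)).radical := by
  have h15 : (15 : K) ≠ 0 := by
    intro h
    have h1 : ((15 : ℕ) : K) = 0 := by exact_mod_cast h
    rw [CharP.cast_eq_zero_iff K p] at h1
    have h2 : p ∣ 3 * 5 := h1
    rcases (Nat.Prime.dvd_mul hp).1 h2 with h3 | h3
    · have := Nat.le_of_dvd (by norm_num) h3
      omega
    · have := Nat.le_of_dvd (by norm_num) h3
      omega
  have d0 : pderiv 0 F = X 1 * X 2 ^ 3 + 5 * C s * X 0 ^ 4 := by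
    rw [hF]
    simp [pderiv_X, Derivation.leibniz, Derivation.leibniz_pow, Pi.single_apply]
    ring
  have d1 : pderiv 1 F = X 0 * X 2 ^ 3 + 5 * C t * X 1 ^ 4 := by
    rw [hF]
    simp [pderiv_X, Derivation.leibniz, Derivation.leibniz_pow, Pi.single_apply]
    ring
  have d2 : pderiv 2 F = 3 * X 0 * X 1 * X 2 ^ 2 := by
    rw [hF]
    simp [pderiv_X, Derivation.leibniz, Derivation.leibniz_pow, Pi.single_apply]
    ring
  have key : ∀ a : K, a ≠ 0 → C (15 * a)⁻¹ * (15 * C a) = (1 : MvPolynomial (Fin 3) K) := by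
    intro a ha
    have e : (15 : MvPolynomial (Fin 3) K) = C 15 := (map_ofNat C 15).symm
    rw [e, ← C_mul, ← C_mul, inv_mul_cancel₀ (mul_ne_zero h15 ha), C_1]
  have m0 : pderiv 0 F ∈ Ideal.span {F, pderiv 0 F, pderiv 1 F, pderiv 2 F} :=
    Ideal.subset_span (by simp)
  have m1 : pderiv 1 F ∈ Ideal.span {F, pderiv 0 F, pderiv 1 F, pderiv 2 F} :=
    Ideal.subset_span (by simp)
  have m2 : pderiv 2 F ∈ Ideal.span {F, pderiv 0 F, pderiv 1 F, pderiv 2 F} :=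
    Ideal.subset_span (by simp)
  constructor
  · refine ⟨5, ?_⟩
    have e : (X 0 : MvPolynomial (Fin 3) K) ^ 5
        = C (15 * s)⁻¹ * (3 * X 0 * pderiv 0 F - X 2 * pderiv 2 F) := by
      rw [d0, d2]
      linear_combination (-(X 0 : MvPolynomial (Fin 3) K) ^ 5) * key s hs
    rw [e]
    exact Ideal.mul_mem_left _ _
      (Ideal.sub_mem _ (Ideal.mul_mem_left _ _ m0) (Ideal.mul_mem_left _ _ m2))
  · refine ⟨5, ?_⟩
    have e : (X 1 : MvPolynomial (Fin 3) K) ^ 5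
        = C (15 * t)⁻¹ * (3 * X 1 * pderiv 1 F - X 2 * pderiv 2 F) := by
      rw [d1, d2]
      linear_combination (-(X 1 : MvPolynomial (Fin 3) K) ^ 5) * key t ht
    rw [e]
    exact Ideal.mul_mem_left _ _
      (Ideal.sub_mem _ (Ideal.mul_mem_left _ _ m1) (Ideal.mul_mem_left _ _ m2))
end

section
/- Let K be an algebraically closed field of characteristic p > 5 and let s, t be nonzero elements of K. Then the quintic polynomial F = x*y*z^3 + s*x^5 + t*y^5 is irreducible in K[x,y,z]. -/
open MvPolynomial

lemma aux_c3 {R : Type*} [CommRing R] (a b : R) :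
    (Polynomial.C a * Polynomial.X ^ 3 + Polynomial.C b).coeff 3 = a := by
  simp [Polynomial.coeff_C]

lemma aux_c0 {R : Type*} [CommRing R] (a b : R) :
    (Polynomial.C a * Polynomial.X ^ 3 + Polynomial.C b).coeff 0 = b := by
  simp

lemma aux_poly (K : Type*) [Field K] [IsAlgClosed K] (h5 : (5 : K) ≠ 0)
    (s t : K) (hs : s ≠ 0) (ht : t ≠ 0) :
    Irreducible (Polynomial.C (X 1 * X 0 : MvPolynomial (Fin 2) K) * Polynomial.X ^ 3 +
      Polynomial.C (C s * X 1 ^ 5 + C t * X 0 ^ 5)) := by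
  obtain ⟨c, hc⟩ := IsAlgClosed.exists_pow_nat_eq (-t / s) (n := 5) (by norm_num)
  have hc0 : c ≠ 0 := by
    rintro rfl
    have : -t / s ≠ 0 := div_ne_zero (neg_ne_zero.2 ht) hs
    apply this
    rw [← hc]
    norm_num
  have hsc : s * c ^ 5 + t = 0 := by
    rw [hc]; field_simp; ring
  let φ : MvPolynomial (Fin 2) K →ₐ[K] Polynomial K :=
    aeval ![Polynomial.X, Polynomial.C c * Polynomial.X]
  have φ0 : φ (X 0) = Polynomial.X := by simp [φ]
  have φ1 : φ (X 1) = Polynomial.C c * Polynomial.X := by simp [φ]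
  have φC : ∀ a, φ (C a) = Polynomial.C a := fun a => by simp [φ]
  have hab : (X 1 * X 0 : MvPolynomial (Fin 2) K) ≠ 0 := mul_ne_zero (X_ne_zero _) (X_ne_zero _)
  have hnd : (Polynomial.C (X 1 * X 0 : MvPolynomial (Fin 2) K) * Polynomial.X ^ 3 +
      Polynomial.C (C s * X 1 ^ 5 + C t * X 0 ^ 5)).natDegree = 3 := by
    compute_degree!
  have hd := Polynomial.degree_eq_natDegree (p := Polynomial.C (X 1 * X 0 : MvPolynomial (Fin 2) K) * Polynomial.X ^ 3 +
      Polynomial.C (C s * X 1 ^ 5 + C t * X 0 ^ 5)) (by intro h; rw [h] at hnd; simp at hnd)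
  rw [hnd] at hd
  refine Polynomial.irreducible_of_eisenstein_criterion (P := RingHom.ker φ)
    (RingHom.ker_isPrime _) ?_ ?_ ?_ ?_ ?_
  · rw [Polynomial.leadingCoeff, hnd, aux_c3]
    simp [RingHom.mem_ker, φ0, φ1, hc0]
  · intro n hn
    rw [hd] at hn
    have hn : n < 3 := by exact_mod_cast hn
    rw [RingHom.mem_ker, Polynomial.coeff_add, Polynomial.coeff_C_mul, Polynomial.coeff_X_pow,
      if_neg hn.ne, mul_zero, zero_add, Polynomial.coeff_C]
    split_ifs
    · rw [map_add, map_mul, map_mul, map_pow, map_pow, φ0, φ1, φC, φC, mul_pow, ← mul_assoc,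
        ← map_pow, ← map_mul, ← add_mul, ← map_add, hsc]
      simp
    · simp
  · rw [hd]; norm_num
  · have key : ∀ f ∈ (RingHom.ker φ) ^ 2, φ (pderiv 1 f) = 0 := by
      intro f hf
      rw [pow_two] at hf
      refine Submodule.mul_induction_on hf ?_ ?_
      · intro m hm n hn
        rw [RingHom.mem_ker] at hm hn
        simp [Derivation.leibniz, hm, hn]
      · intro x y hx hy
        simp [hx, hy]
    intro h
    rw [aux_c0] at h
    have := key _ h
    have h01 : pderiv (R := K) (1 : Fin 2) (X 0) = 0 := pderiv_X_of_ne (by decide)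
    have h5' : (5 : Polynomial K) ≠ 0 := by
      intro h; apply h5
      have := congrArg (Polynomial.eval 0) h
      simpa using this
    simp [Derivation.leibniz, Derivation.leibniz_pow, h01, φ1, φC, hs, hc0] at this
    exact h5' ((map_ofNat φ 5).symm.trans this)
  · intro r hr
    rw [Polynomial.C_dvd_iff_dvd_coeff] at hr
    have h3 := hr 3
    have h0 := hr 0
    rw [aux_c3] at h3
    rw [aux_c0] at h0
    have p1 : IsRelPrime (X 1 : MvPolynomial (Fin 2) K) (C s * X 1 ^ 5 + C t * X 0 ^ 5) := by
      rw [(X_prime (R := K) (i := (1 : Fin 2))).irreducible.isRelPrime_iff_not_dvd]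
      rintro ⟨q, hq⟩
      have := congrArg (eval ![1, 0]) hq
      simp [ht] at this
    have p0 : IsRelPrime (X 0 : MvPolynomial (Fin 2) K) (C s * X 1 ^ 5 + C t * X 0 ^ 5) := by
      rw [(X_prime (R := K) (i := (0 : Fin 2))).irreducible.isRelPrime_iff_not_dvd]
      rintro ⟨q, hq⟩
      have := congrArg (eval ![0, 1]) hq
      simp [hs] at this
    exact (p1.mul_left p0) h3 h0

/-- Over an algebraically closed field of characteristic `p > 5`, for nonzero `s, t`,
the quintic `F = x*y*z^3 + s*x^5 + t*y^5` is irreducible in `K[x,y,z]`. -/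
theorem stmt_2 (p : ℕ) (hp : p.Prime) (hp5 : 5 < p)
    (K : Type*) [Field K] [IsAlgClosed K] [CharP K p]
    (s t : K) (hs : s ≠ 0) (ht : t ≠ 0) :
    Irreducible
      (X 0 * X 1 * X 2 ^ 3 + C s * X 0 ^ 5 + C t * X 1 ^ 5 : MvPolynomial (Fin 3) K) := by
  have h5 : (5 : K) ≠ 0 := by
    intro h
    have h' : ((5 : ℕ) : K) = 0 := by exact_mod_cast h
    rw [CharP.cast_eq_zero_iff K p] at h'
    exact absurd (Nat.le_of_dvd (by norm_num) h') (by omega)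
  let e : MvPolynomial (Fin 3) K ≃ₐ[K] Polynomial (MvPolynomial (Fin 2) K) :=
    (renameEquiv K (Equiv.swap (0 : Fin 3) 2)).trans (finSuccEquiv K 2)
  rw [← MulEquiv.irreducible_iff e]
  have e0 : e (X 0) = Polynomial.C (X 1) := by
    have : (2 : Fin 3) = Fin.succ 1 := rfl
    simp only [e, AlgEquiv.trans_apply, renameEquiv_apply, rename_X, Equiv.swap_apply_left]
    rw [this, finSuccEquiv_X_succ]
  have e1 : e (X 1) = Polynomial.C (X 0) := by
    have : (1 : Fin 3) = Fin.succ 0 := rfl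
    simp only [e, AlgEquiv.trans_apply, renameEquiv_apply, rename_X]
    rw [Equiv.swap_apply_of_ne_of_ne (by decide) (by decide), this, finSuccEquiv_X_succ]
  have e2 : e (X 2) = Polynomial.X := by
    simp only [e, AlgEquiv.trans_apply, renameEquiv_apply, rename_X, Equiv.swap_apply_right]
    rw [finSuccEquiv_X_zero]
  have eC : ∀ a, e (C a) = Polynomial.C (C a) := by
    intro a
    simp [e, finSuccEquiv_apply]
  convert aux_poly K h5 s t hs ht using 1
  simp only [map_add, map_mul, map_pow, e0, e1, e2, eC]
  ring
end

section
/- Let p be a prime with p ≡ 2 (mod 3), K a field of characteristic p, s, t nonzero elements of K, and F = x*y*z^3 + s*x^5 + t*y^5 ∈ K[x,y,z]. Then for all nonnegative integers i and j, the coefficient of x^i*y^j*z^(p-1) in F^(p-1) is zero and the coefficient of x^i*y^j*z^(2p-2) in F^(p-1) is zero. -/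
open MvPolynomial

/-- Every monomial of `f` has `z`-exponent divisible by 3. -/
def ZDiv {K : Type*} [Field K] (f : MvPolynomial (Fin 3) K) : Prop :=
  ∀ d : Fin 3 →₀ ℕ, coeff d f ≠ 0 → 3 ∣ d 2

theorem ZDiv.add {K : Type*} [Field K] {f g : MvPolynomial (Fin 3) K}
    (hf : ZDiv f) (hg : ZDiv g) : ZDiv (f + g) := by
  intro d hd
  by_cases h : coeff d f = 0
  · refine hg d fun h' => hd ?_
    rw [coeff_add, h, h', add_zero]
  · exact hf d h

theorem ZDiv.mul {K : Type*} [Field K] {f g : MvPolynomial (Fin 3) K}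
    (hf : ZDiv f) (hg : ZDiv g) : ZDiv (f * g) := by
  intro d hd
  rw [coeff_mul] at hd
  obtain ⟨x, hx, hne⟩ := Finset.exists_ne_zero_of_sum_ne_zero hd
  rw [← Finset.HasAntidiagonal.mem_antidiagonal.mp hx, Finsupp.add_apply]
  exact dvd_add (hf _ (left_ne_zero_of_mul hne)) (hg _ (right_ne_zero_of_mul hne))

theorem ZDiv.monomial {K : Type*} [Field K] (e : Fin 3 →₀ ℕ) (a : K) (he : 3 ∣ e 2) :
    ZDiv (MvPolynomial.monomial e a) := by
  intro d hd
  rw [coeff_monomial] at hd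
  split_ifs at hd with h
  · exact h ▸ he
  · exact absurd rfl hd

theorem ZDiv.pow {K : Type*} [Field K] {f : MvPolynomial (Fin 3) K}
    (hf : ZDiv f) (n : ℕ) : ZDiv (f ^ n) := by
  induction n with
  | zero => rw [pow_zero]; exact ZDiv.monomial 0 1 (by simp)
  | succ n ih => rw [pow_succ]; exact ih.mul hf

theorem zDiv_F {K : Type*} [Field K] (s t : K) :
    ZDiv (X 0 * X 1 * X 2 ^ 3 + C s * X 0 ^ 5 + C t * X 1 ^ 5 : MvPolynomial (Fin 3) K) := by
  have h0 : ZDiv (X 0 : MvPolynomial (Fin 3) K) := ZDiv.monomial _ _ (by simp)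
  have h1 : ZDiv (X 1 : MvPolynomial (Fin 3) K) := ZDiv.monomial _ _ (by simp)
  have h2 : ZDiv (X 2 ^ 3 : MvPolynomial (Fin 3) K) := by
    rw [X_pow_eq_monomial]; exact ZDiv.monomial _ _ (by simp)
  have hC : ∀ a : K, ZDiv (C a : MvPolynomial (Fin 3) K) := fun a =>
    ZDiv.monomial _ _ (by simp)
  exact (((h0.mul h1).mul h2).add ((hC s).mul (h0.pow 5))).add ((hC t).mul (h1.pow 5))

/-- If `p ≡ 2 (mod 3)`, then in `F^(p-1)` with `F = x*y*z^3 + s*x^5 + t*y^5`,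
the coefficients of `x^i*y^j*z^(p-1)` and of `x^i*y^j*z^(2p-2)` vanish for all `i, j`. -/
theorem stmt_4 (p : ℕ) (hp : p.Prime) (h3 : p % 3 = 2)
    (K : Type*) [Field K] [CharP K p] (s t : K) (hs : s ≠ 0) (ht : t ≠ 0)
    (i j : ℕ) :
    MvPolynomial.coeff
      (Finsupp.single (0 : Fin 3) i + Finsupp.single 1 j + Finsupp.single 2 (p - 1))
      ((X 0 * X 1 * X 2 ^ 3 + C s * X 0 ^ 5 + C t * X 1 ^ 5 :
          MvPolynomial (Fin 3) K) ^ (p - 1)) = 0 ∧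
    MvPolynomial.coeff
      (Finsupp.single (0 : Fin 3) i + Finsupp.single 1 j + Finsupp.single 2 (2 * p - 2))
      ((X 0 * X 1 * X 2 ^ 3 + C s * X 0 ^ 5 + C t * X 1 ^ 5 :
          MvPolynomial (Fin 3) K) ^ (p - 1)) = 0 := by
  have hF := (zDiv_F s t).pow (p - 1)
  constructor
  · by_contra h
    have := hF _ h
    simp at this
    omega
  · by_contra h
    have := hF _ h
    simp at this
    omega
end

section
/- Let p be a prime with p ≡ 2 (mod 3) and with p ≡ 1 (mod 5) or p ≡ 4 (mod 5). Then for each of the 25 exponent triples (i,j,k) in E(p), there is no triple (a,b,c) of integers with 0 ≤ a,b,c ≤ p-1 satisfying the linear system a + b + c = p-1, a + 5b = i, a + 5c = j, 3a = k. -/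
open MvPolynomial

/-- The set of 25 exponent triples from the Hasse–Witt criterion for
`x*y*z^3 + s*x^5 + t*y^5`. -/
def Ep (p : ℕ) : Finset (ℕ × ℕ × ℕ) :=
  { (3*p-3, p-1, p-1), (3*p-1, p-3, p-1), (3*p-2, p-2, p-1), (3*p-2, p-1, p-2),
    (3*p-1, p-2, p-2),
    (p-3, 3*p-1, p-1), (p-1, 3*p-3, p-1), (p-2, 3*p-2, p-1), (p-2, 3*p-1, p-2),
    (p-1, 3*p-2, p-2),
    (2*p-3, 2*p-1, p-1), (2*p-1, 2*p-3, p-1), (2*p-2, 2*p-2, p-1), (2*p-2, 2*p-1, p-2),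
    (2*p-1, 2*p-2, p-2),
    (2*p-3, p-1, 2*p-1), (2*p-1, p-3, 2*p-1), (2*p-2, p-2, 2*p-1), (2*p-2, p-1, 2*p-2),
    (2*p-1, p-2, 2*p-2),
    (p-3, 2*p-1, 2*p-1), (p-1, 2*p-3, 2*p-1), (p-2, 2*p-2, 2*p-1), (p-2, 2*p-1, 2*p-2),
    (p-1, 2*p-2, 2*p-2) }

set_option maxHeartbeats 4000000 in
/-- If `p ≡ 2 (mod 3)` and `p ≡ 1` or `4 (mod 5)`, then for each of the 25
exponent triples `(i,j,k)` in `Ep p`, the system `a+b+c = p-1`, `a+5b = i`,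
`a+5c = j`, `3a = k` has no solution with `0 ≤ a, b, c ≤ p-1`. -/
theorem stmt_5 (p : ℕ) (hp : p.Prime) (h3 : p % 3 = 2)
    (h5 : p % 5 = 1 ∨ p % 5 = 4) :
    ∀ ijk ∈ Ep p, ¬ ∃ a b c : ℕ, a ≤ p - 1 ∧ b ≤ p - 1 ∧ c ≤ p - 1 ∧
      a + b + c = p - 1 ∧ a + 5 * b = ijk.1 ∧ a + 5 * c = ijk.2.1 ∧
      3 * a = ijk.2.2 := by
  obtain ⟨q, hq⟩ : ∃ q, p = 15 * q + 11 ∨ p = 15 * q + 14 := ⟨p / 15, by omega⟩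
  clear h3 h5 hp
  rintro ⟨i, j, k⟩ hmem ⟨a, b, c, -, -, -, hs, h1, hj, hk⟩
  simp only [Ep, Finset.mem_insert, Finset.mem_singleton, Prod.mk.injEq] at hmem
  simp only at h1 hj hk
  rcases hmem with h | h | h | h | h | h | h | h | h | h | h | h | h | h | h | h | h | h | h |
    h | h | h | h | h | h <;> obtain ⟨hi, hj', hk'⟩ := h <;> omega
end

section
/- Let p > 5 be a prime with p ≡ 2 (mod 3) and with p ≡ 1 (mod 5) or p ≡ 4 (mod 5). Let K be a field of characteristic p, s, t nonzero elements of K, and F = x*y*z^3 + s*x^5 + t*y^5 ∈ K[x,y,z]. Then for every (i,j,k) in E(p), the coefficient of x^i*y^j*z^k in F^(p-1) is zero. -/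
open MvPolynomial

/-- Exponents occurring in `F` come from one of its three monomials. -/
lemma base_support {K : Type*} [Field K] (s t : K) (d : Fin 3 →₀ ℕ)
    (h : MvPolynomial.coeff d (X 0 * X 1 * X 2 ^ 3 + C s * X 0 ^ 5 + C t * X 1 ^ 5 :
            MvPolynomial (Fin 3) K) ≠ 0) :
    (d 0 = 1 ∧ d 1 = 1 ∧ d 2 = 3) ∨ (d 0 = 5 ∧ d 1 = 0 ∧ d 2 = 0) ∨
      (d 0 = 0 ∧ d 1 = 5 ∧ d 2 = 0) := by
  have e : (X 0 * X 1 * X 2 ^ 3 + C s * X 0 ^ 5 + C t * X 1 ^ 5 : MvPolynomial (Fin 3) K) =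
      monomial (Finsupp.single 0 1 + Finsupp.single 1 1 + Finsupp.single 2 3) 1 +
      monomial (Finsupp.single 0 5) s + monomial (Finsupp.single 1 5) t := by
    simp only [X_pow_eq_monomial]
    simp only [X, monomial_mul, C_mul_monomial, mul_one]
  rw [e] at h
  simp only [coeff_add, coeff_monomial] at h
  by_cases h1 : Finsupp.single 0 1 + Finsupp.single 1 1 + Finsupp.single 2 3 = d
  · left; subst h1; simp [Finsupp.single_apply]
  by_cases h2 : Finsupp.single 0 5 = d
  · right; left; subst h2; simp [Finsupp.single_apply]
  by_cases h3 : Finsupp.single 1 5 = d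
  · right; right; subst h3; simp [Finsupp.single_apply]
  simp [h1, h2, h3] at h

/-- Exponents occurring in `F ^ n` are sums of `n` exponents of monomials of `F`. -/
lemma pow_support {K : Type*} [Field K] (s t : K) (n : ℕ) : ∀ (d : Fin 3 →₀ ℕ),
    MvPolynomial.coeff d ((X 0 * X 1 * X 2 ^ 3 + C s * X 0 ^ 5 + C t * X 1 ^ 5 :
            MvPolynomial (Fin 3) K) ^ n) ≠ 0 →
    ∃ a b c, a + b + c = n ∧ d 0 = a + 5 * b ∧ d 1 = a + 5 * c ∧ d 2 = 3 * a := by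
  induction n with
  | zero =>
    intro d h
    rw [pow_zero, coeff_one] at h
    have : 0 = d := by by_contra h'; simp [h'] at h
    subst this
    exact ⟨0, 0, 0, by simp⟩
  | succ n ih =>
    intro d h
    rw [pow_succ, coeff_mul] at h
    obtain ⟨⟨u, v⟩, huv, hne⟩ := Finset.exists_ne_zero_of_sum_ne_zero h
    rw [Finset.HasAntidiagonal.mem_antidiagonal] at huv
    simp only at huv hne
    obtain ⟨a, b, c, hn, h0, h1, h2⟩ := ih u (left_ne_zero_of_mul hne)
    subst huv
    simp only [Finsupp.add_apply]
    rcases base_support s t v (right_ne_zero_of_mul hne) with h | h | h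
    · exact ⟨a + 1, b, c, by omega⟩
    · exact ⟨a, b + 1, c, by omega⟩
    · exact ⟨a, b, c + 1, by omega⟩

/-- If `p > 5` is a prime with `p ≡ 2 (mod 3)` and `p ≡ 1` or `4 (mod 5)`, then
every coefficient of `F^(p-1)` at an exponent triple in `Ep p` vanishes, where
`F = x*y*z^3 + s*x^5 + t*y^5`. -/
theorem stmt_6 (p : ℕ) (hp : p.Prime) (hp5 : 5 < p) (h3 : p % 3 = 2)
    (h5 : p % 5 = 1 ∨ p % 5 = 4)
    (K : Type*) [Field K] [CharP K p] (s t : K) (hs : s ≠ 0) (ht : t ≠ 0) :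
    ∀ ijk ∈ Ep p,
      MvPolynomial.coeff
        (Finsupp.single (0 : Fin 3) ijk.1 + Finsupp.single 1 ijk.2.1 +
          Finsupp.single 2 ijk.2.2)
        ((X 0 * X 1 * X 2 ^ 3 + C s * X 0 ^ 5 + C t * X 1 ^ 5 :
            MvPolynomial (Fin 3) K) ^ (p - 1)) = 0 := by
  intro ijk hijk
  by_contra hne
  obtain ⟨a, b, c, hn, h0, h1, h2⟩ := pow_support s t (p - 1) _ hne
  simp [Finsupp.single_apply] at h0 h1 h2
  obtain ⟨i, j, k⟩ := ijk
  simp only [Ep, Finset.mem_insert, Finset.mem_singleton, Prod.mk.injEq] at hijk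
  simp only at h0 h1 h2
  have h12 : 2 ≤ p := hp.two_le
  clear hne
  rcases hijk with h | h | h | h | h | h | h | h | h | h | h | h | h | h | h | h | h | h | h | h |
    h | h | h | h | h <;> omega
end

section
/- Let p > 5 be a prime with p ≡ 2 (mod 3) and p ≡ 3 (mod 5), K a field of characteristic p, s, t nonzero elements of K, and F = x*y*z^3 + s*x^5 + t*y^5 ∈ K[x,y,z]. Then the coefficient of x^(3p-2)*y^(p-1)*z^(p-2) in F^(p-1) equals s^(4(2p-1)/15) * t^((2p-1)/15) * M, where M is the image in K of the multinomial coefficient (p-1)!/( ((p-2)/3)! * (4(2p-1)/15)! * ((2p-1)/15)! ); in particular this coefficient is nonzero in K. -/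
open MvPolynomial

theorem aux_term {K : Type*} [Field K] (s t : K) (k : Fin 3 → ℕ) (m : ℕ) :
    (m : MvPolynomial (Fin 3) K) * ∏ i, (![X 0 * X 1 * X 2 ^ 3, C s * X 0 ^ 5, C t * X 1 ^ 5] :
      Fin 3 → MvPolynomial (Fin 3) K) i ^ k i =
    monomial (Finsupp.single (0 : Fin 3) (k 0 + 5 * k 1) + Finsupp.single 1 (k 0 + 5 * k 2) +
        Finsupp.single 2 (3 * k 0)) (s ^ k 1 * t ^ k 2 * (m : K)) := by
  have h : ∀ (a b c : ℕ) (r : K), monomial (Finsupp.single (0 : Fin 3) a + Finsupp.single 1 b +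
        Finsupp.single 2 c) r = C r * (X 0 ^ a * X 1 ^ b * X 2 ^ c) := by
    intro a b c r
    simp only [X_pow_eq_monomial, monomial_mul, C_mul_monomial, mul_one]
  rw [h]
  simp only [Fin.prod_univ_three, Matrix.cons_val, map_mul, map_pow, map_natCast]
  ring

/-- If `p > 5` is a prime with `p ≡ 2 (mod 3)` and `p ≡ 3 (mod 5)`, then the
coefficient of `x^(3p-2)*y^(p-1)*z^(p-2)` in `F^(p-1)` equals
`s^(4(2p-1)/15) * t^((2p-1)/15)` times the multinomial coefficient
`(p-1)!/(((p-2)/3)! (4(2p-1)/15)! ((2p-1)/15)!)` viewed in `K`, and is nonzero. -/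
theorem stmt_8 (p : ℕ) (hp : p.Prime) (hp5 : 5 < p) (h3 : p % 3 = 2) (h5 : p % 5 = 3)
    (K : Type*) [Field K] [CharP K p] (s t : K) (hs : s ≠ 0) (ht : t ≠ 0) :
    MvPolynomial.coeff
      (Finsupp.single (0 : Fin 3) (3 * p - 2) + Finsupp.single 1 (p - 1) +
        Finsupp.single 2 (p - 2))
      ((X 0 * X 1 * X 2 ^ 3 + C s * X 0 ^ 5 + C t * X 1 ^ 5 :
          MvPolynomial (Fin 3) K) ^ (p - 1)) =
      s ^ (4 * (2 * p - 1) / 15) * t ^ ((2 * p - 1) / 15) *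
        ((((p - 1).factorial /
            (((p - 2) / 3).factorial * (4 * (2 * p - 1) / 15).factorial *
              ((2 * p - 1) / 15).factorial)) : ℕ) : K) ∧
    MvPolynomial.coeff
      (Finsupp.single (0 : Fin 3) (3 * p - 2) + Finsupp.single 1 (p - 1) +
        Finsupp.single 2 (p - 2))
      ((X 0 * X 1 * X 2 ^ 3 + C s * X 0 ^ 5 + C t * X 1 ^ 5 :
          MvPolynomial (Fin 3) K) ^ (p - 1)) ≠ 0 := by
  obtain ⟨k, rfl⟩ : ∃ k, p = 15 * k + 8 := ⟨p / 15, by omega⟩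
  have e1 : 3 * (15 * k + 8) - 2 = (5 * k + 2) + 5 * (8 * k + 4) := by omega
  have e2 : 15 * k + 8 - 1 = (5 * k + 2) + 5 * (2 * k + 1) := by omega
  have e2' : 15 * k + 8 - 1 = (5 * k + 2) + (8 * k + 4) + (2 * k + 1) := by omega
  have e3 : 15 * k + 8 - 2 = 3 * (5 * k + 2) := by omega
  have e4 : (15 * k + 8 - 2) / 3 = 5 * k + 2 := by omega
  have e5 : 4 * (2 * (15 * k + 8) - 1) / 15 = 8 * k + 4 := by omega
  have e6 : (2 * (15 * k + 8) - 1) / 15 = 2 * k + 1 := by omega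
  have hM : Nat.multinomial Finset.univ ![5 * k + 2, 8 * k + 4, 2 * k + 1] =
      (15 * k + 8 - 1).factorial / ((5 * k + 2).factorial * (8 * k + 4).factorial *
        (2 * k + 1).factorial) := by
    rw [Nat.multinomial_univ_three, e2']
  have key : MvPolynomial.coeff
      (Finsupp.single (0 : Fin 3) (3 * (15 * k + 8) - 2) + Finsupp.single 1 (15 * k + 8 - 1) +
        Finsupp.single 2 (15 * k + 8 - 2))
      ((X 0 * X 1 * X 2 ^ 3 + C s * X 0 ^ 5 + C t * X 1 ^ 5 :
          MvPolynomial (Fin 3) K) ^ (15 * k + 8 - 1)) =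
      s ^ (8 * k + 4) * t ^ (2 * k + 1) *
        ((Nat.multinomial Finset.univ ![5 * k + 2, 8 * k + 4, 2 * k + 1] : ℕ) : K) := by
    have hsum : (X 0 * X 1 * X 2 ^ 3 + C s * X 0 ^ 5 + C t * X 1 ^ 5 : MvPolynomial (Fin 3) K) =
        ∑ i, (![X 0 * X 1 * X 2 ^ 3, C s * X 0 ^ 5, C t * X 1 ^ 5] :
          Fin 3 → MvPolynomial (Fin 3) K) i := by
      simp [Fin.sum_univ_three]
    rw [hsum, Finset.sum_pow_eq_sum_piAntidiag, coeff_sum,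
      Finset.sum_eq_single ![5 * k + 2, 8 * k + 4, 2 * k + 1]]
    · rw [aux_term, coeff_monomial, if_pos]
      · simp
      · rw [e1, e2, e3]
        simp
    · intro f hf hne
      rw [aux_term, coeff_monomial, if_neg]
      intro h
      apply hne
      have h0 := DFunLike.congr_fun h 0
      have h1 := DFunLike.congr_fun h 1
      have h2 := DFunLike.congr_fun h 2
      simp at h0 h1 h2
      ext i
      fin_cases i <;> simp <;> omega
    · intro h
      exfalso
      apply h
      simp [Finset.mem_piAntidiag, Fin.sum_univ_three]
      omega
  have hne : ((Nat.multinomial Finset.univ ![5 * k + 2, 8 * k + 4, 2 * k + 1] : ℕ) : K) ≠ 0 := by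
    intro h
    rw [CharP.cast_eq_zero_iff K (15 * k + 8)] at h
    have hd : (15 * k + 8) ∣ (15 * k + 8 - 1).factorial := by
      have := Nat.multinomial_spec Finset.univ ![5 * k + 2, 8 * k + 4, 2 * k + 1]
      have e : ∑ i, ![5 * k + 2, 8 * k + 4, 2 * k + 1] i = 15 * k + 8 - 1 := by
        simp [Fin.sum_univ_three]
        omega
      rw [e] at this
      rw [← this]
      exact Dvd.dvd.mul_left h _
    rw [hp.dvd_factorial] at hd
    omega
  rw [e4, e5, e6, ← hM, key]
  exact ⟨rfl, mul_ne_zero (mul_ne_zero (pow_ne_zero _ hs) (pow_ne_zero _ ht)) hne⟩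
end

section
/- Let p > 5 be a prime with p ≡ 1 (mod 3), K a field of characteristic p, s, t nonzero elements of K, and F = x*y*z^3 + s*x^5 + t*y^5 ∈ K[x,y,z]. Then the coefficient of x^(2p-2)*y^(2p-2)*z^(p-1) in F^(p-1) equals s^((p-1)/3) * t^((p-1)/3) * M, where M is the image in K of the multinomial coefficient (p-1)!/( ((p-1)/3)! )^3; in particular this coefficient is nonzero in K. -/
open MvPolynomial

lemma aux_coeff {K : Type*} [Field K] (s t : K) (m : ℕ) :
    MvPolynomial.coeff
      (Finsupp.single (0 : Fin 3) (6 * m) + Finsupp.single 1 (6 * m) +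
        Finsupp.single 2 (3 * m))
      ((X 0 * X 1 * X 2 ^ 3 + C s * X 0 ^ 5 + C t * X 1 ^ 5 :
          MvPolynomial (Fin 3) K) ^ (3 * m)) =
      s ^ m * t ^ m * (((3 * m).factorial / (m.factorial) ^ 3 : ℕ) : K) := by
  have hF : (X 0 * X 1 * X 2 ^ 3 + C s * X 0 ^ 5 + C t * X 1 ^ 5 : MvPolynomial (Fin 3) K)
      = ∑ i : Fin 3, (![X 0 * X 1 * X 2 ^ 3, C s * X 0 ^ 5, C t * X 1 ^ 5] :
          Fin 3 → MvPolynomial (Fin 3) K) i := by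
    simp [Fin.sum_univ_three]
  have hterm : ∀ k : Fin 3 → ℕ, (∏ i : Fin 3, (![X 0 * X 1 * X 2 ^ 3, C s * X 0 ^ 5, C t * X 1 ^ 5] :
          Fin 3 → MvPolynomial (Fin 3) K) i ^ k i)
      = monomial (Finsupp.single (0 : Fin 3) (k 0 + 5 * k 1) + Finsupp.single 1 (k 0 + 5 * k 2) +
        Finsupp.single 2 (3 * k 0)) (s ^ k 1 * t ^ k 2) := by
    intro k
    have h : ∀ (a b c : ℕ) (r : K), monomial (Finsupp.single (0 : Fin 3) a + Finsupp.single 1 b +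
        Finsupp.single 2 c) r = C r * (X 0 ^ a * X 1 ^ b * X 2 ^ c) := by
      intro a b c r
      rw [X_pow_eq_monomial, X_pow_eq_monomial, X_pow_eq_monomial, monomial_mul, monomial_mul,
        C_mul_monomial]
      simp
    rw [h]
    simp only [Fin.prod_univ_three, Matrix.cons_val_zero, Matrix.cons_val_one, Matrix.cons_val,
      C_mul, C_pow]
    ring
  rw [hF, Finset.sum_pow_eq_sum_piAntidiag, coeff_sum]
  rw [Finset.sum_eq_single (fun _ => m)]
  · rw [hterm, ← map_natCast (C : K →+* MvPolynomial (Fin 3) K), coeff_C_mul, coeff_monomial,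
      if_pos (by congr 1 <;> ring_nf)]
    have : Nat.multinomial Finset.univ (fun _ : Fin 3 => m)
        = (3 * m).factorial / m.factorial ^ 3 := by
      simp [Nat.multinomial]
    rw [this]; ring
  · intro k hk hne
    rw [hterm, ← map_natCast (C : K →+* MvPolynomial (Fin 3) K), coeff_C_mul, coeff_monomial,
      if_neg, mul_zero]
    intro he
    apply hne
    have e0 := DFunLike.congr_fun he 0
    have e1 := DFunLike.congr_fun he 1
    have e2 := DFunLike.congr_fun he 2
    simp [Finsupp.single_apply] at e0 e1 e2
    funext i
    fin_cases i <;> simp <;> omega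
  · intro h
    exact absurd (by simp [Finset.mem_piAntidiag]) h

/-- If `p > 5` is a prime with `p ≡ 1 (mod 3)`, then the coefficient of
`x^(2p-2)*y^(2p-2)*z^(p-1)` in `F^(p-1)` equals `s^((p-1)/3) * t^((p-1)/3)` times
the multinomial coefficient `(p-1)!/(((p-1)/3)!)^3` viewed in `K`, and is nonzero. -/
theorem stmt_10 (p : ℕ) (hp : p.Prime) (hp5 : 5 < p) (h3 : p % 3 = 1)
    (K : Type*) [Field K] [CharP K p] (s t : K) (hs : s ≠ 0) (ht : t ≠ 0) :
    MvPolynomial.coeff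
      (Finsupp.single (0 : Fin 3) (2 * p - 2) + Finsupp.single 1 (2 * p - 2) +
        Finsupp.single 2 (p - 1))
      ((X 0 * X 1 * X 2 ^ 3 + C s * X 0 ^ 5 + C t * X 1 ^ 5 :
          MvPolynomial (Fin 3) K) ^ (p - 1)) =
      s ^ ((p - 1) / 3) * t ^ ((p - 1) / 3) *
        ((((p - 1).factorial / (((p - 1) / 3).factorial) ^ 3) : ℕ) : K) ∧
    MvPolynomial.coeff
      (Finsupp.single (0 : Fin 3) (2 * p - 2) + Finsupp.single 1 (2 * p - 2) +
        Finsupp.single 2 (p - 1))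
      ((X 0 * X 1 * X 2 ^ 3 + C s * X 0 ^ 5 + C t * X 1 ^ 5 :
          MvPolynomial (Fin 3) K) ^ (p - 1)) ≠ 0 := by
  obtain ⟨m, rfl⟩ : ∃ m, p = 3 * m + 1 := ⟨p / 3, by omega⟩
  have h1 : 2 * (3 * m + 1) - 2 = 6 * m := by omega
  have h2 : 3 * m + 1 - 1 = 3 * m := by omega
  have h4 : 3 * m / 3 = m := by omega
  rw [h1, h2, h4, aux_coeff]
  refine ⟨rfl, mul_ne_zero (mul_ne_zero (pow_ne_zero _ hs) (pow_ne_zero _ ht)) ?_⟩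
  rw [Ne, CharP.cast_eq_zero_iff K (3 * m + 1)]
  intro hd
  have hdv : m.factorial ^ 3 ∣ (3 * m).factorial := by
    simpa using Nat.prod_factorial_dvd_factorial_sum (Finset.univ : Finset (Fin 3)) (fun _ => m)
  have h5 := (hp.dvd_factorial).1 (hd.trans (Nat.div_dvd_of_dvd hdv))
  omega
end

section
/- Let p > 5 be a prime, K a field of characteristic p, s, t nonzero elements of K, and F = x*y*z^3 + s*x^5 + t*y^5 ∈ K[x,y,z]. Then the coefficient of x^i*y^j*z^k in F^(p-1) is zero for every (i,j,k) in E(p) if and only if p ≡ 2 (mod 3) and (p ≡ 1 (mod 5) or p ≡ 4 (mod 5)). -/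
open MvPolynomial

/-- The monomial `x^i y^j z^k` as a finitely supported exponent function. -/
noncomputable def expo (i j k : ℕ) : Fin 3 →₀ ℕ :=
  Finsupp.single (0 : Fin 3) i + Finsupp.single 1 j + Finsupp.single 2 k

lemma expo_inj {i j k i' j' k' : ℕ} :
    expo i j k = expo i' j' k' ↔ i = i' ∧ j = j' ∧ k = k' := by
  constructor
  · intro h
    have h0 := DFunLike.congr_fun h 0
    have h1 := DFunLike.congr_fun h 1
    have h2 := DFunLike.congr_fun h 2
    simp [expo] at h0 h1 h2
    exact ⟨h0, h1, h2⟩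
  · rintro ⟨rfl, rfl, rfl⟩; rfl

lemma monomial_expo {K : Type*} [Field K] (i j k : ℕ) (u : K) :
    (C u * X 0 ^ i * X 1 ^ j * X 2 ^ k : MvPolynomial (Fin 3) K) =
      monomial (expo i j k) u := by
  simp only [X_pow_eq_monomial, C_mul_monomial, monomial_mul, expo, mul_one]

lemma pow_expand {K : Type*} [Field K] (s t : K) (n : ℕ) :
    ((X 0 * X 1 * X 2 ^ 3 + C s * X 0 ^ 5 + C t * X 1 ^ 5 :
      MvPolynomial (Fin 3) K) ^ n) =
    ∑ m ∈ Finset.range (n + 1), ∑ a ∈ Finset.range (m + 1),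
      monomial (expo (a + 5 * (m - a)) (a + 5 * (n - m)) (3 * a))
        (s ^ (m - a) * t ^ (n - m) * (m.choose a : K) * (n.choose m : K)) := by
  rw [add_pow]
  refine Finset.sum_congr rfl fun m _ => ?_
  rw [add_pow, Finset.sum_mul, Finset.sum_mul]
  refine Finset.sum_congr rfl fun a _ => ?_
  rw [← monomial_expo]
  simp only [map_mul, map_pow, map_natCast]
  ring

lemma choose_ne {p : ℕ} (hp : p.Prime) (K : Type*) [Field K] [CharP K p] {n k : ℕ}
    (hn : n < p) (hk : k ≤ n) : (n.choose k : K) ≠ 0 := by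
  intro h
  rw [CharP.cast_eq_zero_iff K p] at h
  have h2 : p ∣ n.factorial := by
    rw [← Nat.choose_mul_factorial_mul_factorial hk, mul_assoc]
    exact Dvd.dvd.mul_right h _
  have := (hp.dvd_factorial).1 h2
  omega

lemma coeff_eq_zero_iff' {p : ℕ} (hp : p.Prime) (K : Type*) [Field K] [CharP K p] (s t : K)
    (hs : s ≠ 0) (ht : t ≠ 0) (n : ℕ) (hn : n < p) (i j k : ℕ) :
    MvPolynomial.coeff (expo i j k)
        ((X 0 * X 1 * X 2 ^ 3 + C s * X 0 ^ 5 + C t * X 1 ^ 5 :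
            MvPolynomial (Fin 3) K) ^ n) = 0 ↔
      ∀ a b c : ℕ, a + b + c = n → i = a + 5 * b → j = a + 5 * c → k = 3 * a → False := by
  rw [pow_expand]
  simp only [coeff_sum, coeff_monomial, expo_inj]
  constructor
  · rintro h a b c rfl rfl rfl rfl
    rw [Finset.sum_eq_single (a + b), Finset.sum_eq_single a, if_pos (by omega)] at h
    · have h1 := choose_ne hp K (n := a + b) (k := a) (by omega) (by omega)
      have h2 := choose_ne hp K (n := a + b + c) (k := a + b) (by omega) (by omega)
      exact mul_ne_zero (mul_ne_zero (mul_ne_zero (pow_ne_zero _ hs) (pow_ne_zero _ ht)) h1) h2 h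
    · intro a' ha' hne
      rw [if_neg (by omega)]
    · intro h'
      simp at h'
    · intro m hm hne
      refine Finset.sum_eq_zero fun a' ha' => ?_
      rw [Finset.mem_range] at hm ha'
      rw [if_neg (by omega)]
    · intro h'
      exfalso
      apply h'
      rw [Finset.mem_range]
      omega
  · intro h
    refine Finset.sum_eq_zero fun m hm => Finset.sum_eq_zero fun a ha => ?_
    rw [Finset.mem_range] at hm ha
    rw [if_neg]
    rintro ⟨h1, h2, h3⟩
    exact h a (m - a) (n - m) (by omega) h1.symm h2.symm h3.symm

/-- Hasse–Witt criterion: for a prime `p > 5`, a field `K` of characteristic `p`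
and nonzero `s, t : K`, all coefficients of `F^(p-1)` at the exponent triples of
`Ep p` vanish iff `p ≡ 2 (mod 3)` and `p ≡ 1` or `4 (mod 5)`, where
`F = x*y*z^3 + s*x^5 + t*y^5`. -/
theorem stmt_11 (p : ℕ) (hp : p.Prime) (hp5 : 5 < p)
    (K : Type*) [Field K] [CharP K p] (s t : K) (hs : s ≠ 0) (ht : t ≠ 0) :
    (∀ ijk ∈ Ep p,
      MvPolynomial.coeff
        (Finsupp.single (0 : Fin 3) ijk.1 + Finsupp.single 1 ijk.2.1 +
          Finsupp.single 2 ijk.2.2)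
        ((X 0 * X 1 * X 2 ^ 3 + C s * X 0 ^ 5 + C t * X 1 ^ 5 :
            MvPolynomial (Fin 3) K) ^ (p - 1)) = 0) ↔
    (p % 3 = 2 ∧ (p % 5 = 1 ∨ p % 5 = 4)) := by
  have key := coeff_eq_zero_iff' hp K s t hs ht (p - 1) (by omega)
  simp only [expo] at key
  simp only [key]
  have p3 : p % 3 ≠ 0 := by
    intro h
    have := (Nat.prime_dvd_prime_iff_eq Nat.prime_three hp).1 (Nat.dvd_of_mod_eq_zero h)
    omega
  have p5 : p % 5 ≠ 0 := by
    intro h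
    have := (Nat.prime_dvd_prime_iff_eq Nat.prime_five hp).1 (Nat.dvd_of_mod_eq_zero h)
    omega
  constructor
  · intro h
    by_contra hcon
    have hr : p % 3 = 1 ∨ p % 15 = 2 ∨ p % 15 = 8 := by
      clear h key
      obtain ⟨q, r, hpq, hr15⟩ : ∃ q r, p = 15 * q + r ∧ r < 15 :=
        ⟨p / 15, p % 15, by omega, by omega⟩
      interval_cases r <;> omega
    rcases hr with hr | hr | hr
    · obtain ⟨q, hq⟩ : ∃ q, p = 3 * q + 1 := ⟨p / 3, by omega⟩
      have h1 := h (2*p-2, 2*p-2, p-1) (by simp [Ep]) q q q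
      clear h key
      dsimp only at h1
      exact h1 (by omega) (by omega) (by omega) (by omega)
    · obtain ⟨q, hq⟩ : ∃ q, p = 15 * q + 2 := ⟨p / 15, by omega⟩
      have h1 := h (3*p-1, p-2, p-2) (by simp [Ep]) (5 * q) (8 * q + 1) (2 * q)
      clear h key
      dsimp only at h1
      exact h1 (by omega) (by omega) (by omega) (by omega)
    · obtain ⟨q, hq⟩ : ∃ q, p = 15 * q + 8 := ⟨p / 15, by omega⟩
      have h1 := h (3*p-2, p-1, p-2) (by simp [Ep]) (5 * q + 2) (8 * q + 4) (2 * q + 1)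
      clear h key
      dsimp only at h1
      exact h1 (by omega) (by omega) (by omega) (by omega)
  · intro hmod ijk hmem a b c h0 h1 h2 h3
    clear key
    simp only [Ep, Finset.mem_insert, Finset.mem_singleton] at hmem
    rcases hmem with rfl | rfl | rfl | rfl | rfl | rfl | rfl | rfl | rfl | rfl | rfl | rfl |
      rfl | rfl | rfl | rfl | rfl | rfl | rfl | rfl | rfl | rfl | rfl | rfl | rfl <;>
    · dsimp only at h1 h2 h3
      omega
end

section
/- There are infinitely many primes p such that p ≡ 2 (mod 3) and p ≡ 1 (mod 5) or p ≡ 4 (mod 5); equivalently, infinitely many primes p congruent to 11 or 14 modulo 15. Consequently, there are infinitely many primes p > 5 such that for every field K of characteristic p and all nonzero s, t ∈ K, every coefficient of F^(p-1) at an exponent triple in E(p) vanishes, where F = x*y*z^3 + s*x^5 + t*y^5. -/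
open MvPolynomial

/-- Any exponent occurring in a power of `F` is a sum of exponents of the three monomials. -/
lemma F_pow_support {K : Type} [Field K] (s t : K) (n : ℕ) : ∀ m : Fin 3 →₀ ℕ,
    MvPolynomial.coeff m ((X 0 * X 1 * X 2 ^ 3 + C s * X 0 ^ 5 + C t * X 1 ^ 5 :
                MvPolynomial (Fin 3) K) ^ n) ≠ 0 →
    ∃ a b c : ℕ, a + b + c = n ∧ m 0 = a + 5 * b ∧ m 1 = a + 5 * c ∧ m 2 = 3 * a := by
  have h1 : (X 0 * X 1 * X 2 ^ 3 : MvPolynomial (Fin 3) K) =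
      monomial (Finsupp.single 0 1 + Finsupp.single 1 1 + Finsupp.single 2 3) 1 := by
    simp only [X_pow_eq_monomial]
    simp only [X, monomial_mul, mul_one]
  have h2 : (C s * X 0 ^ 5 : MvPolynomial (Fin 3) K) = monomial (Finsupp.single 0 5) s := by
    simp [X_pow_eq_monomial, C_mul_monomial]
  have h3 : (C t * X 1 ^ 5 : MvPolynomial (Fin 3) K) = monomial (Finsupp.single 1 5) t := by
    simp [X_pow_eq_monomial, C_mul_monomial]
  rw [h1, h2, h3]
  induction n with
  | zero =>
    intro m hm
    have : m = 0 := by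
      by_contra h
      apply hm
      rw [pow_zero, coeff_one, if_neg (fun h' => h h'.symm)]
    subst this
    exact ⟨0, 0, 0, by simp⟩
  | succ n ih =>
    intro m hm
    rw [pow_succ, mul_add, mul_add, coeff_add, coeff_add, coeff_mul_monomial',
      coeff_mul_monomial', coeff_mul_monomial'] at hm
    have key : ∀ (e : Fin 3 →₀ ℕ), e ≤ m →
        (m - e) 0 + e 0 = m 0 ∧ (m - e) 1 + e 1 = m 1 ∧ (m - e) 2 + e 2 = m 2 := by
      intro e he
      have := he 0
      have := he 1
      have := he 2
      simp only [Finsupp.tsub_apply]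
      omega
    have step : ∀ (e : Fin 3 →₀ ℕ) (r : K), (if e ≤ m then
        coeff (m - e) ((monomial (Finsupp.single 0 1 + Finsupp.single 1 1 + Finsupp.single 2 3) 1
          + monomial (Finsupp.single 0 5) s + monomial (Finsupp.single 1 5) t :
          MvPolynomial (Fin 3) K) ^ n) * r else 0) ≠ 0 →
        ∃ a b c : ℕ, a + b + c = n ∧ m 0 = a + 5 * b + e 0 ∧ m 1 = a + 5 * c + e 1
          ∧ m 2 = 3 * a + e 2 := by
      intro e r h
      split_ifs at h with he
      · obtain ⟨a, b, c, h0, h1, h2, h3⟩ := ih _ (left_ne_zero_of_mul h)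
        have := key e he
        exact ⟨a, b, c, by omega⟩
      · exact absurd rfl h
    by_cases c1 : (if (Finsupp.single 0 1 + Finsupp.single 1 1 + Finsupp.single 2 3) ≤ m then
        coeff (m - (Finsupp.single 0 1 + Finsupp.single 1 1 + Finsupp.single 2 3))
          ((monomial (Finsupp.single 0 1 + Finsupp.single 1 1 + Finsupp.single 2 3) 1
          + monomial (Finsupp.single 0 5) s + monomial (Finsupp.single 1 5) t :
          MvPolynomial (Fin 3) K) ^ n) * 1 else 0) = 0
    · rw [c1, zero_add] at hm
      by_cases c2 : (if (Finsupp.single 0 5) ≤ m then coeff (m - (Finsupp.single 0 5))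
          ((monomial (Finsupp.single 0 1 + Finsupp.single 1 1 + Finsupp.single 2 3) 1
          + monomial (Finsupp.single 0 5) s + monomial (Finsupp.single 1 5) t :
          MvPolynomial (Fin 3) K) ^ n) * s else 0) = 0
      · rw [c2, zero_add] at hm
        obtain ⟨a, b, c, h⟩ := step _ _ hm
        simp at h
        exact ⟨a, b, c + 1, by omega⟩
      · obtain ⟨a, b, c, h⟩ := step _ _ c2
        simp at h
        exact ⟨a, b + 1, c, by omega⟩
    · obtain ⟨a, b, c, h⟩ := step _ _ c1
      simp at h
      exact ⟨a + 1, b, c, by omega⟩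

lemma infinite_11_14 : {p : ℕ | p.Prime ∧ 5 < p ∧ (p % 15 = 11 ∨ p % 15 = 14)}.Infinite := by
  rw [Set.infinite_iff_exists_gt]
  intro n
  obtain ⟨p, hp, hpp, hm⟩ := Nat.forall_exists_prime_gt_and_modEq (n + 5) (q := 15) (a := 11)
    (by norm_num) (by norm_num)
  have : p % 15 = 11 := hm
  exact ⟨p, ⟨hpp, by omega, Or.inl this⟩, by omega⟩

/-- Arithmetic obstruction to the exponents of `Ep p`. -/
lemma no_exponent {p : ℕ} (h5 : 5 < p) (hp : p % 15 = 11 ∨ p % 15 = 14) (ijk : ℕ × ℕ × ℕ)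
    (h : ijk ∈ Ep p) (a b c : ℕ) (h0 : ijk.1 = a + 5 * b)
    (h1 : ijk.2.1 = a + 5 * c) (h2 : ijk.2.2 = 3 * a) : False := by
  obtain ⟨i, j, k⟩ := ijk
  simp only [Ep, Finset.mem_insert, Finset.mem_singleton, Prod.mk.injEq] at h
  dsimp only at h0 h1 h2
  rcases h with h | h | h | h | h | h | h | h | h | h | h | h | h | h | h | h | h | h | h | h |
    h | h | h | h | h <;> omega

/-- There are infinitely many primes `p ≡ 2 (mod 3)` with `p ≡ 1` or `4 (mod 5)`
(equivalently, `p ≡ 11` or `14 (mod 15)`), and consequently infinitely many primes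
`p > 5` such that for every field `K` of characteristic `p` and nonzero `s, t : K`,
every coefficient of `F^(p-1)` at an exponent triple in `Ep p` vanishes, where
`F = x*y*z^3 + s*x^5 + t*y^5`. -/
theorem stmt_12 :
    {p : ℕ | p.Prime ∧ p % 3 = 2 ∧ (p % 5 = 1 ∨ p % 5 = 4)}.Infinite ∧
    {p : ℕ | p.Prime ∧ (p % 15 = 11 ∨ p % 15 = 14)}.Infinite ∧
    {p : ℕ | p.Prime ∧ 5 < p ∧
      ∀ (K : Type) [Field K], CharP K p →
        ∀ s t : K, s ≠ 0 → t ≠ 0 → ∀ ijk ∈ Ep p,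
          MvPolynomial.coeff
            (Finsupp.single (0 : Fin 3) ijk.1 + Finsupp.single 1 ijk.2.1 +
              Finsupp.single 2 ijk.2.2)
            ((X 0 * X 1 * X 2 ^ 3 + C s * X 0 ^ 5 + C t * X 1 ^ 5 :
                MvPolynomial (Fin 3) K) ^ (p - 1)) = 0}.Infinite := by
  refine ⟨infinite_11_14.mono ?_, infinite_11_14.mono ?_, infinite_11_14.mono ?_⟩
  · rintro p ⟨hp, h5, h⟩
    exact ⟨hp, by omega, by omega⟩
  · rintro p ⟨hp, h5, h⟩
    exact ⟨hp, h⟩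
  · rintro p ⟨hp, h5, h⟩
    refine ⟨hp, h5, ?_⟩
    intro K _ _ s t _ _ ijk hijk
    by_contra hne
    obtain ⟨a, b, c, -, h0, h1, h2⟩ := F_pow_support s t _ _ hne
    simp at h0 h1 h2
    exact no_exponent h5 h ijk hijk a b c h0 h1 h2
end

section
/- Let p be a prime and m a nonnegative integer with p + 1 = 15m + 12. Let K be a field, and let Y, Z ∈ K with Y ≠ 0 and Y^p + Y = -Z^(p+1). Set y = Y^(3m+2) and z = Y^(-(m+1)) * Z^(5m+4) (inverse taken in K). Then 1 + y^5 + y*z^3 = 0. (Hence the Hermitian curve Y^p + Y = -Z^(p+1) covers the affine curve 1 + y^5 + y*z^3 = 0, proving maximality of the genus-5 trigonal curve T_p over F_{p^2} when p ≡ 11 (mod 15).) -/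
/-- If `p + 1 = 15m + 12`, the Hermitian curve `Y^p + Y = -Z^(p+1)` covers the
affine curve `1 + y^5 + y*z^3 = 0` via `y = Y^(3m+2)`, `z = Y^(-(m+1)) Z^(5m+4)`. -/
theorem stmt_14 (p : ℕ) (hp : p.Prime) (m : ℕ) (hpm : p + 1 = 15 * m + 12)
    (K : Type*) [Field K] (Y Z : K) (hY : Y ≠ 0)
    (hH : Y ^ p + Y = -Z ^ (p + 1)) :
    1 + (Y ^ (3 * m + 2)) ^ 5 +
      Y ^ (3 * m + 2) * ((Y ^ (m + 1))⁻¹ * Z ^ (5 * m + 4)) ^ 3 = 0 := by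
  obtain rfl : p = 15 * m + 11 := by omega
  have h1 : Y ^ (3 * m + 2) * ((Y ^ (m + 1))⁻¹ * Z ^ (5 * m + 4)) ^ 3
      = Y⁻¹ * Z ^ (15 * m + 11 + 1) := by
    have e : Y * Y ^ (3 * m + 2) = (Y ^ (m + 1)) ^ 3 := by ring
    have hne : (Y ^ (m + 1)) ^ 3 ≠ 0 := pow_ne_zero _ (pow_ne_zero _ hY)
    have e2 : (Z ^ (5 * m + 4)) ^ 3 = Z ^ (15 * m + 11 + 1) := by ring
    rw [mul_pow, inv_pow, e2, ← mul_assoc]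
    congr 1
    rw [← div_eq_mul_inv, div_eq_iff hne, ← e, inv_mul_cancel_left₀ hY]
  rw [h1]
  have h2 : Y * (1 + (Y ^ (3 * m + 2)) ^ 5 + Y⁻¹ * Z ^ (15 * m + 11 + 1)) = 0 := by
    have e3 : Y * (Y ^ (3 * m + 2)) ^ 5 = Y ^ (15 * m + 11) := by ring
    rw [mul_add, mul_add, e3, mul_inv_cancel_left₀ hY, mul_one, add_comm Y, hH, neg_add_cancel]
  exact (mul_eq_zero.mp h2).resolve_left hY
end

section
/- Let a, b, c be positive integers with b + 2c = a, let g = gcd(a, gcd(b, c)), and let n = a*b/g. Let p be a prime and m a positive integer with p + 1 = n*m. Let K be a field, and let Y, Z ∈ K with Y ≠ 0 and 1 + Y^(p+1) + Z^(p+1) = 0. Set y = Y^(b*m/g) and z = Y^(-(c*m/g)) * Z^(a*m/g) (inverse taken in K; note g divides a, b, and c, so these exponents are integers). Then 1 + y^a + z^b * y^c = 0. (Hence the curve C_{p,a,b,c} given by x^a + y^a + z^b*x^c*y^c = 0 is covered by the Hermitian curve and is maximal over F_{p^2} when p ≡ -1 (mod n).) -/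
/-- Let `b + 2c = a`, `g = gcd(a, gcd(b, c))` and `n = a*b/g`. If `p + 1 = n*m`,
then the Hermitian/Fermat curve `1 + Y^(p+1) + Z^(p+1) = 0` covers the affine
curve `1 + y^a + z^b*y^c = 0` via `y = Y^(bm/g)`, `z = Y^(-(cm/g)) Z^(am/g)`. -/
theorem stmt_15 (a b c : ℕ) (ha : 0 < a) (hb : 0 < b) (hc : 0 < c)
    (habc : b + 2 * c = a)
    (p : ℕ) (hp : p.Prime) (m : ℕ) (hm : 0 < m)
    (hpm : p + 1 = a * b / Nat.gcd a (Nat.gcd b c) * m)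
    (K : Type*) [Field K] (Y Z : K) (hY : Y ≠ 0)
    (hH : 1 + Y ^ (p + 1) + Z ^ (p + 1) = 0) :
    1 + (Y ^ (b * m / Nat.gcd a (Nat.gcd b c))) ^ a +
      ((Y ^ (c * m / Nat.gcd a (Nat.gcd b c)))⁻¹ *
        Z ^ (a * m / Nat.gcd a (Nat.gcd b c))) ^ b *
      (Y ^ (b * m / Nat.gcd a (Nat.gcd b c))) ^ c = 0 := by
  have hg : 0 < Nat.gcd a (Nat.gcd b c) := Nat.gcd_pos_of_pos_left _ ha
  have hga : Nat.gcd a (Nat.gcd b c) ∣ a := Nat.gcd_dvd_left _ _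
  have hgb : Nat.gcd a (Nat.gcd b c) ∣ b :=
    (Nat.gcd_dvd_right _ _).trans (Nat.gcd_dvd_left _ _)
  have hgc : Nat.gcd a (Nat.gcd b c) ∣ c :=
    (Nat.gcd_dvd_right _ _).trans (Nat.gcd_dvd_right _ _)
  generalize Nat.gcd a (Nat.gcd b c) = g at *
  obtain ⟨a', rfl⟩ := hga
  obtain ⟨b', rfl⟩ := hgb
  obtain ⟨c', rfl⟩ := hgc
  simp only [mul_assoc, Nat.mul_div_cancel_left _ hg] at hpm ⊢
  have h1 : b' * m * (g * a') = p + 1 := by rw [hpm]; ring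
  have h2 : a' * m * (g * b') = p + 1 := by rw [hpm]; ring
  have h3 : b' * m * (g * c') = c' * m * (g * b') := by ring
  rw [mul_pow, inv_pow]
  simp only [← pow_mul]
  rw [h1, h2, h3, mul_right_comm, inv_mul_cancel₀ (pow_ne_zero _ hY), one_mul]
  exact hH
end

section
/- Let a, b, c be positive integers with b + 2c = a and gcd(a, b) = 1, and let d be an integer with 2 ≤ d, a dividing d - 2, and b dividing d. Let p be a prime and m a nonnegative integer with p + 1 = a*b*m + d. Let K be a field, and let Y, Z ∈ K with Y ≠ 0 and Y^p + Y = -Z^(p+1). Set y = Y^(b*m + (d-2)/a) and z = Y^(-(c*m + (c*(d-2)+a)/(a*b))) * Z^(a*m + d/b) (inverse taken in K; all the displayed exponents are integers, using that a*b divides c*(d-2)+a). Then 1 + y^a + z^b * y^c = 0. (Hence the curve C_{p,a,b,c} given by x^a + y^a + z^b*x^c*y^c = 0 is covered by the Hermitian curve Y^p + Y = -Z^(p+1) and is maximal over F_{p^2} when p ≡ d - 1 (mod a*b).) -/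
/-- Let `b + 2c = a` with `gcd(a,b) = 1`, and `d ≥ 2` with `a ∣ d - 2`, `b ∣ d`.
If `p + 1 = a*b*m + d`, the Hermitian curve `Y^p + Y = -Z^(p+1)` covers the
affine curve `1 + y^a + z^b*y^c = 0` via `y = Y^(bm + (d-2)/a)`,
`z = Y^(-(cm + (c(d-2)+a)/(ab))) Z^(am + d/b)`. -/
theorem stmt_17 (a b c : ℕ) (ha : 0 < a) (hb : 0 < b) (hc : 0 < c)
    (habc : b + 2 * c = a) (hcop : Nat.gcd a b = 1)
    (d : ℕ) (hd2 : 2 ≤ d) (hda : a ∣ d - 2) (hdb : b ∣ d)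
    (p : ℕ) (hp : p.Prime) (m : ℕ) (hpm : p + 1 = a * b * m + d)
    (K : Type*) [Field K] (Y Z : K) (hY : Y ≠ 0)
    (hH : Y ^ p + Y = -Z ^ (p + 1)) :
    1 + (Y ^ (b * m + (d - 2) / a)) ^ a +
      ((Y ^ (c * m + (c * (d - 2) + a) / (a * b)))⁻¹ *
        Z ^ (a * m + d / b)) ^ b *
      (Y ^ (b * m + (d - 2) / a)) ^ c = 0 := by
  obtain ⟨k, hk⟩ := hda
  obtain ⟨l, hl⟩ := hdb
  have h2b : Nat.Coprime b 2 := by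
    rw [Nat.coprime_comm, Nat.Prime.coprime_iff_not_dvd Nat.prime_two]
    intro h
    have h' : 2 ∣ a := by omega
    have := Nat.dvd_gcd h' h
    omega
  have hbq : b ∣ c * k + 1 := by
    apply h2b.dvd_of_dvd_mul_left
    have e : 2 * (c * k + 1) + b * k = b * l := by
      rw [← hl, ← Nat.sub_add_cancel hd2, hk, ← habc]; ring
    exact (Nat.dvd_add_left (Dvd.intro k rfl)).mp (e ▸ Dvd.intro l rfl)
  obtain ⟨q, hq⟩ := hbq
  have e1 : (d - 2) / a = k := by rw [hk]; exact Nat.mul_div_cancel_left k ha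
  have e2 : d / b = l := by rw [hl]; exact Nat.mul_div_cancel_left l hb
  have e3 : (c * (d - 2) + a) / (a * b) = q := by
    have : c * (d - 2) + a = a * b * q := by
      rw [hk, mul_assoc a b q, ← hq]; ring
    rw [this]; exact Nat.mul_div_cancel_left q (Nat.mul_pos ha hb)
  rw [e1, e2, e3]
  have x1 : (b * m + k) * a + 1 = p := by
    have : (b * m + k) * a = a * b * m + a * k := by ring
    omega
  have x2 : (a * m + l) * b = p + 1 := by
    rw [hpm, hl]; ring
  have x3 : (c * m + q) * b = (b * m + k) * c + 1 := by
    have : (c * m + q) * b = c * m * b + b * q := by ring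
    rw [this, ← hq]; ring
  rw [mul_pow, inv_pow, ← pow_mul, ← pow_mul, ← pow_mul, ← pow_mul, x2, x3]
  have hZ : Z ^ (p + 1) = -(Y ^ p + Y) := by rw [hH, neg_neg]
  rw [hZ, ← x1, pow_succ, pow_succ]
  have := pow_ne_zero ((b * m + k) * c) hY
  field_simp
  ring
end
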